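/- For τ in the upper half plane ℍ, 𝓢₁(−τ) − 𝓢₁(τ) = ∑_{n≥1} (π·cot(πnτ) + iπ) = −2πi ∑_{n≥1} ∑_{m≥1} e^{2πimnτ}. -/

import Mathlib

open MeasureTheory Set

noncomputable def digammaC (x : ℂ) : ℂ := deriv Complex.Gamma x / Complex.Gamma x

/-- `𝓢₁(x) = ∑ (ψ(nx) - log(nx) + 1/(2nx))`. -/
noncomputable def S1 (x : ℂ) : ℂ :=
  ∑' n : ℕ, (digammaC ((n + 1) * x) - Complex.log ((n + 1) * x) + 1 / (2 * (n + 1) * x))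

/-!
By the reflection formula for `ψ`, the summands of `𝓢₁(-τ)` and `𝓢₁(τ)` at `n` differ by
`π cot(π n τ) + π i`, and the cotangent is a geometric series in `exp(2 π i n τ)`. What remains is
the convergence of `𝓢₁(τ)` and `𝓢₁(-τ)`. On the slit plane
`ψ(z) - log z + 1 / (2 z) = -∑ₘ E(z + m)`, where `E(w)` is the error of the one-step trapezoidal
rule for `∫ dt / t` over `[w, w + 1]`: for `z > 0` the difference equation of `ψ` makes the series
telescope and log-convexity of `Γ` provides the limit, and the identity theorem does the rest.
Since `E(w) = O(|w|⁻³)`, `𝓢₁(τ)` is dominated by the weight 3 Eisenstein series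
`∑ |n τ + m|⁻³`, which converges for `τ` off the real line.
-/

section SlitPlane

open Complex

variable {z : ℂ}

lemma add_ofReal_mem_slitPlane (hz : z ∈ slitPlane) {t : ℝ} (ht : 0 ≤ t) :
    z + t ∈ slitPlane := by
  rw [mem_slitPlane_iff] at hz ⊢
  refine hz.imp (fun hre => ?_) (fun him => ?_)
  · simpa using add_pos_of_pos_of_nonneg hre ht
  · simpa using him

lemma add_natCast_mem_slitPlane (hz : z ∈ slitPlane) (n : ℕ) : z + n ∈ slitPlane := by
  exact_mod_cast add_ofReal_mem_slitPlane hz n.cast_nonneg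

lemma ne_neg_natCast_of_mem_slitPlane (hz : z ∈ slitPlane) (n : ℕ) : z ≠ -n := by
  rintro rfl
  simpa using add_natCast_mem_slitPlane hz n

end SlitPlane

section Digamma

open Complex
open scoped Real

variable {z : ℂ} {x : ℝ}

lemma digammaC_eq_digamma : digammaC = digamma := rfl

lemma differentiableAt_digamma (hz : ∀ n : ℕ, z ≠ -n) : DifferentiableAt ℂ digamma z := by
  have hΓ : AnalyticAt ℂ Gamma z := by
    simpa [Pi.inv_def] using
      (differentiable_one_div_Gamma.analyticAt z).inv (inv_ne_zero (Gamma_ne_zero hz))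
  exact hΓ.deriv.differentiableAt.div hΓ.differentiableAt (Gamma_ne_zero hz)

lemma ne_neg_natCast_of_pos (hx : 0 < x) (n : ℕ) : x ≠ -n := by
  linarith [n.cast_nonneg (α := ℝ)]

lemma digamma_ofReal (hx : ∀ n : ℕ, x ≠ -n) : digamma x = (logDeriv Real.Gamma x : ℝ) := by
  have hreal : HasDerivAt (fun y : ℝ => Gamma y) (deriv Real.Gamma x : ℝ) x := by
    simp_rw [Gamma_ofReal]
    exact (Real.differentiableAt_Gamma hx).hasDerivAt.ofReal_comp
  have hcomplex : HasDerivAt (fun y : ℝ => Gamma y) (deriv Gamma x) x :=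
    (differentiableAt_Gamma x (mod_cast hx)).hasDerivAt.comp_ofReal
  rw [digamma_def, logDeriv_apply, logDeriv_apply, hcomplex.unique hreal, Gamma_ofReal, ofReal_div]

lemma slope_log_Gamma_add_one (hx : 0 < x) :
    slope (Real.log ∘ Real.Gamma) x (x + 1) = Real.log x := by
  simp [slope_def_field, Real.Gamma_add_one hx.ne',
    Real.log_mul hx.ne' (Real.Gamma_pos_of_pos hx).ne']

lemma hasDerivAt_log_Gamma (hx : 0 < x) :
    HasDerivAt (Real.log ∘ Real.Gamma) (logDeriv Real.Gamma x) x :=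
  (Real.differentiableAt_Gamma (ne_neg_natCast_of_pos hx)).hasDerivAt.log
    (Real.Gamma_pos_of_pos hx).ne'

lemma logDeriv_Gamma_le_log (hx : 0 < x) : logDeriv Real.Gamma x ≤ Real.log x := by
  rw [← slope_log_Gamma_add_one hx]
  exact Real.convexOn_log_Gamma.le_slope_of_hasDerivAt hx (Set.mem_Ioi.2 (by positivity))
    (lt_add_one x) (hasDerivAt_log_Gamma hx)

lemma log_le_logDeriv_Gamma_add_one (hx : 0 < x) :
    Real.log x ≤ logDeriv Real.Gamma (x + 1) := by
  rw [← slope_log_Gamma_add_one hx]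
  exact Real.convexOn_log_Gamma.slope_le_of_hasDerivAt hx (Set.mem_Ioi.2 (by positivity))
    (lt_add_one x) (hasDerivAt_log_Gamma (by positivity))

lemma norm_digamma_sub_log_ofReal_le (hx : 0 < x) : ‖digamma x - log x‖ ≤ x⁻¹ := by
  have hrec : logDeriv Real.Gamma (x + 1) = logDeriv Real.Gamma x + x⁻¹ := by
    have h := digamma_apply_add_one x (mod_cast ne_neg_natCast_of_pos hx)
    rw [← ofReal_one, ← ofReal_add, digamma_ofReal (ne_neg_natCast_of_pos hx),
      digamma_ofReal (ne_neg_natCast_of_pos (by positivity))] at h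
    exact_mod_cast h
  rw [digamma_ofReal (ne_neg_natCast_of_pos hx), ← ofReal_log hx.le, ← ofReal_sub, norm_real,
    Real.norm_eq_abs, abs_le]
  constructor
  · linarith [log_le_logDeriv_Gamma_add_one hx]
  · linarith [logDeriv_Gamma_le_log hx, inv_pos.2 hx]

lemma digamma_one_sub_sub_digamma (hz : z ∈ integerComplement) :
    digamma (1 - z) - digamma z = π * cot (π * z) := by
  have hz_neg (n : ℕ) : z ≠ -n := fun h => hz ⟨-n, by simp [h]⟩
  have hz_one_sub (n : ℕ) : 1 - z ≠ -n := fun h => hz ⟨1 + n, by push_cast; linear_combination h⟩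
  have hleft : logDeriv (fun w => Gamma w * Gamma (1 - w)) z = digamma z - digamma (1 - z) := by
    have hcomp : logDeriv (fun w => Gamma (1 - w)) z = -digamma (1 - z) := by
      have h := logDeriv_comp (differentiableAt_Gamma (1 - z) hz_one_sub)
        (differentiableAt_id.const_sub 1)
      simpa [Function.comp_def, digamma_def] using h
    rw [logDeriv_mul (f := Gamma) (g := fun w => Gamma (1 - w)) z (Gamma_ne_zero hz_neg)
      (Gamma_ne_zero hz_one_sub) (differentiableAt_Gamma z hz_neg)
      (by fun_prop (disch := assumption)), hcomp]
    rfl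
  have hright : logDeriv (fun w => π / sin (π * w)) z = -(π * cot (π * z)) := by
    have hcomp : logDeriv (fun w => sin (π * w)) z = π * cot (π * z) := by
      have h := logDeriv_comp (f := sin) (g := fun w => π * w) (x := z)
        differentiableAt_sin (by fun_prop)
      simpa [Function.comp_def, mul_comm] using h
    rw [logDeriv_div z (mod_cast Real.pi_ne_zero) (sin_pi_mul_ne_zero hz) (by fun_prop)
      (by fun_prop), hcomp]
    simp
  simp_rw [Gamma_mul_Gamma_one_sub] at hleft
  linear_combination hleft - hright

lemma digamma_neg_sub_digamma (hz : z ∈ integerComplement) :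
    digamma (-z) - digamma z - 1 / z = π * cot (π * z) := by
  have hrec := digamma_apply_add_one (-z) fun n h => hz ⟨n, by simpa using neg_injective h.symm⟩
  rw [← digamma_one_sub_sub_digamma hz, sub_eq_neg_add 1 z, hrec, inv_neg]
  ring

end Digamma

section TrapezoidError

open Complex Filter

/-- The error of the one-step trapezoidal rule for `∫ dt / t` over `[w, w + 1]`. -/
noncomputable def trapezoidError (w : ℂ) : ℂ :=
  (w⁻¹ + (w + 1)⁻¹) / 2 - (log (w + 1) - log w)

variable {w : ℂ}

lemma differentiableAt_trapezoidError (hw : w ∈ slitPlane) :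
    DifferentiableAt ℂ trapezoidError w := by
  have hw₁ : w + 1 ∈ slitPlane := mod_cast add_natCast_mem_slitPlane hw 1
  have hw_ne := slitPlane_ne_zero hw
  have hw₁_ne := slitPlane_ne_zero hw₁
  unfold trapezoidError
  fun_prop (disch := assumption)

-- The function is the error of the one-step trapezoidal rule over `[w, w + s]`.
lemma hasDerivAt_trapezoidError_segment (hw : w ∈ slitPlane) {t : ℝ} (ht : 0 ≤ t) :
    HasDerivAt (fun s : ℝ => s * (w⁻¹ + (w + s)⁻¹) / 2 - (log (w + s) - log w))
      (t ^ 2 / (2 * w * (w + t) ^ 2)) t := by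
  have hwt := add_ofReal_mem_slitPlane hw ht
  have hw_ne := slitPlane_ne_zero hw
  have hwt_ne := slitPlane_ne_zero hwt
  have hid : HasDerivAt (fun s : ℝ => (s : ℂ)) 1 t := ofRealCLM.hasDerivAt
  have hshift : HasDerivAt (fun s : ℝ => w + s) 1 t := hid.const_add w
  have h := ((hid.mul ((hshift.inv hwt_ne).const_add w⁻¹)).div_const 2).sub
    ((hshift.clog_real hwt).sub_const (log w))
  convert! h using 1
  simp only [Pi.inv_apply]
  field_simp
  ring

lemma norm_trapezoidError_le (hw : w ∈ slitPlane) (hw₂ : 2 ≤ ‖w‖) :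
    ‖trapezoidError w‖ ≤ 2 * ‖w‖⁻¹ ^ 3 := by
  have hderiv_le (t : ℝ) (ht : t ∈ Set.Ico (0 : ℝ) 1) :
      ‖(t : ℂ) ^ 2 / (2 * w * (w + t) ^ 2)‖ ≤ 2 * ‖w‖⁻¹ ^ 3 := by
    have hwt : ‖w‖ / 2 ≤ ‖w + t‖ := by
      have h := norm_sub_le_norm_add w t
      rw [norm_real, Real.norm_of_nonneg ht.1] at h
      linarith [ht.2]
    calc ‖(t : ℂ) ^ 2 / (2 * w * (w + t) ^ 2)‖ = t ^ 2 / (2 * ‖w‖ * ‖w + t‖ ^ 2) := by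
          simp [abs_of_nonneg ht.1]
      _ ≤ 1 ^ 2 / (2 * ‖w‖ * (‖w‖ / 2) ^ 2) := by
          gcongr
          · exact ht.1
          · exact ht.2.le
      _ = 2 * ‖w‖⁻¹ ^ 3 := by field_simp
  have h := norm_image_sub_le_of_norm_deriv_le_segment_01'
    (fun t ht => (hasDerivAt_trapezoidError_segment hw ht.1).hasDerivWithinAt) hderiv_le
  simpa [trapezoidError] using h

lemma summable_trapezoidError_comp {ι : Type*} {f : ι → ℂ} (hf : ∀ i, f i ∈ slitPlane)
    (hsum : Summable fun i => ‖f i‖⁻¹ ^ 3) : Summable fun i => trapezoidError (f i) := by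
  refine (hsum.mul_left 2).of_norm_bounded_eventually ?_
  have hsmall : ∀ᶠ i in cofinite, ‖f i‖⁻¹ ^ 3 < 2⁻¹ ^ 3 :=
    hsum.tendsto_cofinite_zero.eventually_lt_const (by norm_num)
  filter_upwards [hsmall] with i hi
  have hnorm : 0 < ‖f i‖ := norm_pos_iff.2 (slitPlane_ne_zero (hf i))
  refine norm_trapezoidError_le (hf i) (le_of_lt ?_)
  exact (inv_lt_inv₀ hnorm two_pos).1 (lt_of_pow_lt_pow_left₀ 3 (by norm_num) hi)

lemma summableLocallyUniformlyOn_trapezoidError_add_nat :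
    SummableLocallyUniformlyOn (fun (n : ℕ) w => trapezoidError (w + n)) slitPlane := by
  refine .of_locally_bounded_eventually isOpen_slitPlane fun K hK hKc => ?_
  obtain ⟨R, hR⟩ := hKc.isBounded.exists_norm_le
  refine ⟨fun n => 2 * ((n / 2 : ℝ)⁻¹ ^ 3), ?_, ?_⟩
  · have h := (Real.summable_nat_pow_inv.2 (by norm_num : 1 < 3)).mul_left 16
    refine h.congr fun n => ?_
    rw [inv_div, div_pow, div_eq_mul_inv]
    ring
  · rw [Nat.cofinite_eq_atTop]
    filter_upwards [tendsto_natCast_atTop_atTop.eventually_ge_atTop (2 * R),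
      tendsto_natCast_atTop_atTop.eventually_ge_atTop (4 : ℝ)] with n hnR hn₄ w hw
    have hwn : (n / 2 : ℝ) ≤ ‖w + n‖ := by
      have h := norm_sub_le_norm_add (n : ℂ) w
      rw [norm_natCast, add_comm (n : ℂ)] at h
      linarith [hR w hw]
    refine (norm_trapezoidError_le (add_natCast_mem_slitPlane (hK hw) n) (by linarith)).trans ?_
    gcongr

end TrapezoidError

section DigammaRemainder

open Complex Filter Topology
open scoped Real

/-- The remainder in the asymptotic expansion `ψ(z) ~ log z - 1 / (2 z)`, that is, the summand
of `𝓢₁` at `n x = z`. -/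
noncomputable def digammaRemainder (z : ℂ) : ℂ := digamma z - log z + 1 / (2 * z)

variable {z : ℂ}

lemma digammaRemainder_add_one_sub (hz : ∀ n : ℕ, z ≠ -n) :
    digammaRemainder (z + 1) - digammaRemainder z = trapezoidError z := by
  rw [digammaRemainder, digammaRemainder, trapezoidError, digamma_apply_add_one z hz]
  simp only [one_div, mul_inv]
  ring

lemma digammaRemainder_eq_neg_tsum_of_tendsto (hz : z ∈ slitPlane)
    (hlim : Tendsto (fun n : ℕ => digammaRemainder (z + n)) atTop (𝓝 0)) :
    digammaRemainder z = -∑' n : ℕ, trapezoidError (z + n) := by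
  have htelescope (N : ℕ) : ∑ n ∈ Finset.range N, trapezoidError (z + n) =
      digammaRemainder (z + N) - digammaRemainder z := by
    have hstep (n : ℕ) : trapezoidError (z + n) =
        digammaRemainder (z + (n + 1 : ℕ)) - digammaRemainder (z + n) := by
      rw [← digammaRemainder_add_one_sub
        (ne_neg_natCast_of_mem_slitPlane (add_natCast_mem_slitPlane hz n)),
        Nat.cast_succ, add_assoc]
    simp_rw [hstep]
    simpa using Finset.sum_range_sub (fun n : ℕ => digammaRemainder (z + n)) N
  have hsum := (summableLocallyUniformlyOn_trapezoidError_add_nat.summable hz).tendsto_sum_tsum_nat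
  simp_rw [htelescope] at hsum
  rw [tendsto_nhds_unique hsum (hlim.sub_const _), zero_sub, neg_neg]

lemma tendsto_digammaRemainder_ofReal :
    Tendsto (fun x : ℝ => digammaRemainder x) atTop (𝓝 0) := by
  have hlog : Tendsto (fun x : ℝ => digamma x - log x) atTop (𝓝 0) :=
    squeeze_zero_norm' ((eventually_gt_atTop 0).mono fun _ => norm_digamma_sub_log_ofReal_le)
      tendsto_inv_atTop_zero
  have hinv : Tendsto (fun x : ℝ => 1 / (2 * (x : ℂ))) atTop (𝓝 0) := by
    have h : Tendsto (fun x : ℝ => 2⁻¹ * x⁻¹) atTop (𝓝 0) := by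
      simpa using tendsto_inv_atTop_zero.const_mul (2⁻¹ : ℝ)
    simpa [Function.comp_def, mul_comm] using (continuous_ofReal.tendsto 0).comp h
  simpa [digammaRemainder] using hlog.add hinv

lemma differentiableAt_digammaRemainder (hz : z ∈ slitPlane) :
    DifferentiableAt ℂ digammaRemainder z := by
  have hz_ne := slitPlane_ne_zero hz
  exact ((differentiableAt_digamma (ne_neg_natCast_of_mem_slitPlane hz)).sub
    (differentiableAt_log hz)).add (by fun_prop (disch := simpa))

theorem digammaRemainder_eq_neg_tsum (hz : z ∈ slitPlane) :
    digammaRemainder z = -∑' n : ℕ, trapezoidError (z + n) := by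
  have hleft : DifferentiableOn ℂ digammaRemainder slitPlane := fun w hw =>
    (differentiableAt_digammaRemainder hw).differentiableWithinAt
  have hright : DifferentiableOn ℂ (fun w => -∑' n : ℕ, trapezoidError (w + n)) slitPlane :=
    (summableLocallyUniformlyOn_trapezoidError_add_nat.differentiableOn isOpen_slitPlane
      fun n w hw => (differentiableAt_comp_add_const ..).2
        (differentiableAt_trapezoidError (add_natCast_mem_slitPlane hw n))).neg
  have hreal {x : ℝ} (hx : 0 < x) :
      digammaRemainder x = -∑' n : ℕ, trapezoidError (x + n) := by
    refine digammaRemainder_eq_neg_tsum_of_tendsto (ofReal_mem_slitPlane.2 hx) ?_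
    simpa [Function.comp_def] using tendsto_digammaRemainder_ofReal.comp
      (tendsto_atTop_add_const_left _ x tendsto_natCast_atTop_atTop)
  refine (hleft.analyticOnNhd isOpen_slitPlane).eqOn_of_preconnected_of_frequently_eq
    (hright.analyticOnNhd isOpen_slitPlane)
    (starConvex_one_slitPlane.isPathConnected one_mem_slitPlane).isConnected.isPreconnected
    one_mem_slitPlane ?_ hz
  have hofReal : Tendsto ((↑) : ℝ → ℂ) (𝓝[≠] 1) (𝓝[≠] 1) := by
    rw [← ofReal_one]
    exact continuous_ofReal.continuousWithinAt.tendsto_nhdsWithin fun x hx => by simpa using hx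
  have hpos : ∀ᶠ x : ℝ in 𝓝[≠] 1, 0 < x :=
    eventually_nhdsWithin_of_eventually_nhds (lt_mem_nhds one_pos)
  exact hofReal.frequently (hpos.mono fun x hx => hreal hx).frequently

lemma digammaRemainder_neg_sub (hz : 0 < z.im) :
    digammaRemainder (-z) - digammaRemainder z = π * cot (π * z) + π * I := by
  have hlog : log (-z) = log z - π * I := by
    rw [log, log, norm_neg, arg_neg_eq_arg_sub_pi_of_im_pos hz]
    push_cast
    ring
  have hz_int : z ∈ integerComplement := UpperHalfPlane.coe_mem_integerComplement ⟨z, hz⟩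
  rw [← digamma_neg_sub_digamma hz_int, digammaRemainder, digammaRemainder, hlog]
  ring

end DigammaRemainder

section Lattice

open Complex

variable {τ : ℂ}

lemma summable_norm_inv_pow_three_lattice (hτ : τ.im ≠ 0) :
    Summable fun p : ℤ × ℤ => ‖p.1 * τ + p.2‖⁻¹ ^ 3 := by
  have upper {σ : ℂ} (hσ : 0 < σ.im) : Summable fun p : ℤ × ℤ => ‖p.1 * σ + p.2‖⁻¹ ^ 3 :=
    (summable_prod_eisSummand le_rfl ⟨σ, hσ⟩).norm.congr fun p => by
      simp [EisensteinSeries.eisSummand]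
  rcases hτ.lt_or_gt with hneg | hpos
  · have h := upper (σ := -τ) (by simpa using hneg)
    refine (((Equiv.neg ℤ).prodCongr (Equiv.refl ℤ)).summable_iff.2 h).congr fun p => ?_
    simp
  · exact upper hpos

lemma summable_digammaRemainder_mul (hτ : τ.im ≠ 0) :
    Summable fun n : ℕ => digammaRemainder ((n + 1) * τ) := by
  have hmem (n : ℕ) : (n + 1) * τ ∈ slitPlane := by
    refine mem_slitPlane_iff.2 (Or.inr ?_)
    simpa using mul_ne_zero (Nat.cast_add_one_ne_zero (R := ℝ) n) hτ
  have hinj : Function.Injective fun p : ℕ × ℕ => ((p.1 + 1 : ℤ), (p.2 : ℤ)) := by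
    intro p q h
    simp only [Prod.mk.injEq, add_left_inj, Nat.cast_inj] at h
    exact Prod.ext h.1 h.2
  have hpairs : Summable fun p : ℕ × ℕ => trapezoidError ((p.1 + 1) * τ + p.2) := by
    refine summable_trapezoidError_comp (fun p => add_natCast_mem_slitPlane (hmem p.1) p.2) ?_
    exact ((summable_norm_inv_pow_three_lattice hτ).comp_injective hinj).congr fun p => by simp
  exact hpairs.prod.neg.congr fun n => (digammaRemainder_eq_neg_tsum (hmem n)).symm

end Lattice

lemma S1_eq_tsum_digammaRemainder (x : ℂ) :
    S1 x = ∑' n : ℕ, digammaRemainder ((n + 1) * x) := by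
  simp only [S1, digammaRemainder, digammaC_eq_digamma, mul_assoc]

lemma pi_mul_cot_add_pi_mul_I {z : ℂ} (hz : 0 < z.im) :
    Real.pi * Complex.cot (Real.pi * z) + Real.pi * Complex.I =
      -2 * Real.pi * Complex.I *
        ∑' m : ℕ, Complex.exp (2 * Real.pi * Complex.I * (m + 1) * z) := by
  have hq : ‖Complex.exp (2 * Real.pi * Complex.I * z)‖ < 1 :=
    UpperHalfPlane.norm_exp_two_pi_I_lt_one ⟨z, hz⟩
  have hpow (m : ℕ) : Complex.exp (2 * Real.pi * Complex.I * (m + 1) * z) =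
      Complex.exp (2 * Real.pi * Complex.I * z) ^ (m + 1) := by
    rw [← Complex.exp_nat_mul]
    congr 1
    push_cast
    ring
  have hcot := pi_mul_cot_pi_q_exp ⟨z, hz⟩
  simp only at hcot
  rw [hcot, (summable_geometric_of_norm_lt_one hq).tsum_eq_zero_add, tsum_congr hpow]
  ring

theorem S1_reflection (τ : ℂ) (hτ : 0 < τ.im) :
    S1 (-τ) - S1 τ =
        (∑' n : ℕ, ((Real.pi : ℂ) * Complex.cot (Real.pi * (n + 1) * τ) +
          Real.pi * Complex.I)) ∧
      S1 (-τ) - S1 τ =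
        -2 * Real.pi * Complex.I *
          ∑' n : ℕ, ∑' m : ℕ,
            Complex.exp (2 * Real.pi * Complex.I * (m + 1) * (n + 1) * τ) := by
  have him (n : ℕ) : 0 < ((n + 1) * τ).im := by
    simpa using mul_pos (Nat.cast_add_one_pos (α := ℝ) n) hτ
  have hcot : S1 (-τ) - S1 τ = ∑' n : ℕ, ((Real.pi : ℂ) * Complex.cot (Real.pi * (n + 1) * τ) +
      Real.pi * Complex.I) := by
    rw [S1_eq_tsum_digammaRemainder, S1_eq_tsum_digammaRemainder,
      ← (summable_digammaRemainder_mul (by simpa using hτ.ne')).tsum_sub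
        (summable_digammaRemainder_mul hτ.ne')]
    refine tsum_congr fun n => ?_
    rw [mul_neg, digammaRemainder_neg_sub (him n), mul_assoc]
  refine ⟨hcot, hcot.trans ?_⟩
  rw [← tsum_mul_left]
  refine tsum_congr fun n => ?_
  simp_rw [mul_assoc _ (_ + 1 : ℂ) τ]
  rw [pi_mul_cot_add_pi_mul_I (him n)]
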